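/- arXiv:2411.02007 — 6 statements merged into one kernel-verified Lean document; each statement's English description precedes it below -/
import Mathlib

section
/- Let T > 0, let g : ℝ → ℝ be continuous, and let y, b : ℝ → ℝ be differentiable on [0,T] and satisfy y'(t) ≤ g(y(t)) + b'(t) for all t ∈ [0,T]. Suppose there are constants N₀ ≥ 0 and N₁ ≥ 0 such that b(t₂) − b(t₁) ≤ N₀ + N₁(t₂ − t₁) for all 0 ≤ t₁ < t₂ ≤ T, and suppose ζ̄ ∈ ℝ is such that g(ζ) ≤ −N₁ for every ζ ≥ ζ̄. Then y(t) ≤ max{y(0), ζ̄} + N₀ for all t ∈ [0,T]. -/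
open Set

/-- Zlotnik-type comparison lemma (Lemma 7.4, differential-inequality version):
if `y' ≤ g(y) + b'` on `[0,T]`, `b(t₂) - b(t₁) ≤ N₀ + N₁ (t₂ - t₁)`, and
`g(ζ) ≤ -N₁` for all `ζ ≥ ζ̄`, then `y(t) ≤ max (y 0) ζ̄ + N₀` on `[0,T]`. -/
theorem zlotnik_inequality
    (T : ℝ) (hT : 0 < T)
    (g : ℝ → ℝ) (hg : Continuous g)
    (y b y' b' : ℝ → ℝ)
    (hy : ∀ t ∈ Icc (0:ℝ) T, HasDerivAt y (y' t) t)
    (hb : ∀ t ∈ Icc (0:ℝ) T, HasDerivAt b (b' t) t)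
    (hineq : ∀ t ∈ Icc (0:ℝ) T, y' t ≤ g (y t) + b' t)
    (N₀ N₁ : ℝ) (hN₀ : 0 ≤ N₀) (hN₁ : 0 ≤ N₁)
    (hbN : ∀ t₁ t₂ : ℝ, 0 ≤ t₁ → t₁ < t₂ → t₂ ≤ T →
      b t₂ - b t₁ ≤ N₀ + N₁ * (t₂ - t₁))
    (ζbar : ℝ) (hζ : ∀ ζ : ℝ, ζbar ≤ ζ → g ζ ≤ -N₁) :
    ∀ t ∈ Icc (0:ℝ) T, y t ≤ max (y 0) ζbar + N₀ := by
  intro t ht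
  by_contra! hcon
  have hyc : ContinuousOn y (Icc 0 t) := fun u hu =>
    (hy u ⟨hu.1, hu.2.trans ht.2⟩).continuousAt.continuousWithinAt
  have hSc : IsCompact (Icc (0:ℝ) t ∩ y ⁻¹' Iic (max (y 0) ζbar)) :=
    isCompact_Icc.of_isClosed_subset
      (hyc.preimage_isClosed_of_isClosed isClosed_Icc isClosed_Iic) inter_subset_left
  obtain ⟨s, ⟨hs, hsM⟩, hmax⟩ := hSc.exists_isGreatest
    ⟨0, ⟨le_refl _, ht.1⟩, le_max_left (y 0) ζbar⟩
  have hsM' : y s ≤ max (y 0) ζbar := hsM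
  have hst : s < t := by
    rcases hs.2.lt_or_eq with h | h
    · exact h
    · rw [h] at hsM'
      linarith
  have hder : ∀ u ∈ Icc s t,
      HasDerivAt (fun u => y u - b u + N₁ * u) (y' u - b' u + N₁ * 1) u := by
    intro u hu
    have hu' : u ∈ Icc (0:ℝ) T := ⟨hs.1.trans hu.1, hu.2.trans ht.2⟩
    exact ((hy u hu').sub (hb u hu')).add ((hasDerivAt_id u).const_mul N₁)
  have hanti : AntitoneOn (fun u => y u - b u + N₁ * u) (Icc s t) := by
    apply antitoneOn_of_deriv_nonpos (convex_Icc s t)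
    · exact fun u hu => (hder u hu).continuousAt.continuousWithinAt
    · intro u hu
      exact (hder u (interior_subset hu)).differentiableAt.differentiableWithinAt
    · intro u hu
      rw [(hder u (interior_subset hu)).deriv]
      rw [interior_Icc] at hu
      have hu0 : 0 ≤ u := hs.1.trans hu.1.le
      have hyu : max (y 0) ζbar < y u := by
        by_contra! h
        exact absurd (hmax ⟨⟨hu0, hu.2.le⟩, h⟩) (not_le.mpr hu.1)
      have h1 := hineq u ⟨hu0, hu.2.le.trans ht.2⟩
      have h2 := hζ (y u) ((le_max_right _ _).trans hyu.le)
      linarith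
  have h3 := hanti (left_mem_Icc.mpr hst.le) (right_mem_Icc.mpr hst.le) hst.le
  have h4 := hbN s t hs.1 hst ht.2
  simp only at h3
  linarith
end

section
/- Let R > 0 and let x ∈ ℝ² satisfy 0 < ‖x‖ < R. Define g(y) = log‖x − y‖ − log‖(R/‖x‖)·x − (‖x‖/R)·y‖. Then for every y in the open ball {y : ‖y‖ < R} with y ≠ x, the function g is twice differentiable at y and its Laplacian vanishes there: the sum over i = 1, 2 of the second derivative at t = 0 of the map t ↦ g(y + t·eᵢ) equals 0, where e₁, e₂ is the standard orthonormal basis of ℝ². -/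
open Real

lemma aux_line (a b c : ℝ) (h : a ^ 2 + b ^ 2 ≠ 0) :
    iteratedDeriv 2 (fun t : ℝ => Real.log (√((a - c * t) ^ 2 + b ^ 2))) 0
      = c ^ 2 * (b ^ 2 - a ^ 2) / (a ^ 2 + b ^ 2) ^ 2 := by
  have hu : ∀ t : ℝ, HasDerivAt (fun t : ℝ => a - c * t) (-c) t := fun t => by
    simpa using ((hasDerivAt_id t).const_mul c).const_sub a
  have hq : ∀ t : ℝ, HasDerivAt (fun t : ℝ => (a - c * t) ^ 2 + b ^ 2)
      (2 * (a - c * t) * (-c)) t := fun t => by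
    simpa using ((hu t).pow 2).add_const (b ^ 2)
  have hfun : (fun t : ℝ => Real.log (√((a - c * t) ^ 2 + b ^ 2)))
      = fun t => Real.log ((a - c * t) ^ 2 + b ^ 2) / 2 := by
    funext t
    rw [Real.log_sqrt (by positivity)]
  have hev : ∀ᶠ t in nhds (0 : ℝ), (a - c * t) ^ 2 + b ^ 2 ≠ 0 := by
    have := (hq 0).continuousAt.eventually_ne (y := 0) (by simpa using h)
    exact this
  have hd : deriv (fun t : ℝ => Real.log ((a - c * t) ^ 2 + b ^ 2) / 2)
      =ᶠ[nhds 0] fun t => (-c) * (a - c * t) / ((a - c * t) ^ 2 + b ^ 2) := by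
    filter_upwards [hev] with t ht
    rw [(((hq t).log ht).div_const 2).deriv]
    field_simp
  rw [hfun, iteratedDeriv_succ, iteratedDeriv_one, hd.deriv_eq]
  have := (((hu 0).const_mul (-c)).div (hq 0) (by simpa using h)).deriv
  refine this.trans ?_
  simp only [mul_zero, sub_zero]
  congr 1
  ring

lemma aux_cd {w : EuclideanSpace ℝ (Fin 2)} (hw : w ≠ 0) :
    ContDiffAt ℝ 2 (fun w : EuclideanSpace ℝ (Fin 2) => Real.log ‖w‖) w :=
  (contDiffAt_norm ℝ hw).log (norm_ne_zero_iff.mpr hw)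

lemma aux_sum (w : EuclideanSpace ℝ (Fin 2)) (hw : w ≠ 0) (c : ℝ) :
    ∑ i : Fin 2, iteratedDeriv 2
      (fun t : ℝ => Real.log ‖w - (c * t) • EuclideanSpace.single i (1:ℝ)‖) 0 = 0 := by
  have h : w 0 ^ 2 + w 1 ^ 2 ≠ 0 := by
    intro h
    apply hw
    ext i
    fin_cases i
    · simp; nlinarith [sq_nonneg (w 0), sq_nonneg (w 1)]
    · simp; nlinarith [sq_nonneg (w 0), sq_nonneg (w 1)]
  have h' : w 1 ^ 2 + w 0 ^ 2 ≠ 0 := by rwa [add_comm]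
  have e0 : (fun t : ℝ => Real.log ‖w - (c * t) • EuclideanSpace.single (0 : Fin 2) (1:ℝ)‖)
      = fun t : ℝ => Real.log (√((w 0 - c * t) ^ 2 + w 1 ^ 2)) := by
    funext t
    simp [EuclideanSpace.norm_eq, Fin.sum_univ_two]
  have e1 : (fun t : ℝ => Real.log ‖w - (c * t) • EuclideanSpace.single (1 : Fin 2) (1:ℝ)‖)
      = fun t : ℝ => Real.log (√((w 1 - c * t) ^ 2 + w 0 ^ 2)) := by
    funext t
    simp [EuclideanSpace.norm_eq, Fin.sum_univ_two, add_comm]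
  rw [Fin.sum_univ_two, e0, e1, aux_line _ _ _ h, aux_line _ _ _ h', add_comm (w 1 ^ 2)]
  ring

/-- Harmonicity of the Green function of the disc off the singularity:
for `0 < ‖x‖ < R`, the function
`g(y) = log‖x − y‖ − log‖(R/‖x‖)x − (‖x‖/R)y‖` is twice differentiable at every
`y` in the open disc `‖y‖ < R` with `y ≠ x`, and its Laplacian there vanishes. -/
theorem green_function_disc_harmonic
    (R : ℝ) (hR : 0 < R) (x : EuclideanSpace ℝ (Fin 2))
    (hx0 : 0 < ‖x‖) (hxR : ‖x‖ < R) :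
    ∀ y : EuclideanSpace ℝ (Fin 2), ‖y‖ < R → y ≠ x →
      ContDiffAt ℝ 2
        (fun y' : EuclideanSpace ℝ (Fin 2) =>
          Real.log ‖x - y'‖ - Real.log ‖(R / ‖x‖) • x - (‖x‖ / R) • y'‖) y ∧
      ∑ i : Fin 2,
        iteratedDeriv 2
          (fun t : ℝ =>
            Real.log ‖x - (y + t • EuclideanSpace.single i (1:ℝ))‖ -
              Real.log ‖(R / ‖x‖) • x -
                (‖x‖ / R) • (y + t • EuclideanSpace.single i (1:ℝ))‖) 0 = 0 := by
  intro y hy hyx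
  have h1 : x - y ≠ 0 := sub_ne_zero.mpr (Ne.symm hyx)
  have h2 : (R / ‖x‖) • x - (‖x‖ / R) • y ≠ 0 := by
    intro h
    have h3 := congrArg norm (sub_eq_zero.mp h)
    rw [norm_smul, norm_smul, Real.norm_of_nonneg (by positivity),
      Real.norm_of_nonneg (by positivity), div_mul_cancel₀ _ hx0.ne'] at h3
    have h4 : ‖x‖ / R ≤ 1 := (div_le_one hR).mpr hxR.le
    nlinarith [norm_nonneg y]
  refine ⟨?_, ?_⟩
  · refine ContDiffAt.sub ?_ ?_
    · exact ContDiffAt.comp y (aux_cd h1) (by fun_prop)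
    · exact ContDiffAt.comp y (aux_cd h2) (by fun_prop)
  · have key : ∀ i : Fin 2, iteratedDeriv 2
          (fun t : ℝ =>
            Real.log ‖x - (y + t • EuclideanSpace.single i (1:ℝ))‖ -
              Real.log ‖(R / ‖x‖) • x -
                (‖x‖ / R) • (y + t • EuclideanSpace.single i (1:ℝ))‖) 0
        = iteratedDeriv 2 (fun t : ℝ =>
            Real.log ‖(x - y) - ((1:ℝ) * t) • EuclideanSpace.single i (1:ℝ)‖) 0
          - iteratedDeriv 2 (fun t : ℝ =>
            Real.log ‖((R / ‖x‖) • x - (‖x‖ / R) • y)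
              - ((‖x‖ / R) * t) • EuclideanSpace.single i (1:ℝ)‖) 0 := by
      intro i
      have cd : ∀ (w : EuclideanSpace ℝ (Fin 2)) (c : ℝ), w ≠ 0 → ContDiffAt ℝ 2
          (fun t : ℝ => Real.log ‖w - (c * t) • EuclideanSpace.single i (1:ℝ)‖) 0 := by
        intro w c hw
        refine ContDiffAt.comp (0 : ℝ)
          (g := fun w : EuclideanSpace ℝ (Fin 2) => Real.log ‖w‖)
          (f := fun t : ℝ => w - (c * t) • EuclideanSpace.single i (1:ℝ)) ?_ (by fun_prop)
        apply aux_cd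
        simpa using hw
      rw [← iteratedDeriv_fun_sub (cd _ _ h1) (cd _ _ h2)]
      congr 1
      funext t
      rw [one_mul, sub_sub, smul_add, smul_smul, sub_sub]
    simp only [key, Finset.sum_sub_distrib]
    rw [aux_sum _ h1, aux_sum _ h2, sub_zero]
end

section
/- Let n ≥ 3 be an integer, let c > 0 and R > 0, let x ∈ ℝⁿ satisfy 0 < ‖x‖ < R, and let y ∈ ℝⁿ satisfy ‖y‖ = R. Define G(x,y') = (1/((2−n)c))(‖x − y'‖^{2−n} − ‖(R/‖x‖)·x − (‖x‖/R)·y'‖^{2−n}). Then the map y' ↦ G(x,y') is differentiable at y and its Fréchet derivative at y applied to the outward unit normal vector y/R equals (R² − ‖x‖²)/(cR‖x − y‖ⁿ). -/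
open Real

lemma aux_norm_rpow {n : ℕ} (p k : ℝ) (a y : EuclideanSpace ℝ (Fin n))
    (h : 0 < ‖a - k • y‖) :
    ∃ L : EuclideanSpace ℝ (Fin n) →L[ℝ] ℝ,
      HasFDerivAt (fun y' : EuclideanSpace ℝ (Fin n) => ‖a - k • y'‖ ^ p) L y ∧
      ∀ v, L v = p * ‖a - k • y‖ ^ (p - 2) * (- (k * inner ℝ (a - k • y) v)) := by
  have h1 : HasFDerivAt (fun y' : EuclideanSpace ℝ (Fin n) => a - k • y')
      (-(k • ContinuousLinearMap.id ℝ (EuclideanSpace ℝ (Fin n)))) y :=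
    ((hasFDerivAt_id y).const_smul k).const_sub a
  have h2 := (h1.norm_sq).rpow_const (p := p / 2) (Or.inl (by positivity))
  have e : ∀ (t q : ℝ), 0 ≤ t → (t ^ 2) ^ (q / 2) = t ^ q := by
    intro t q ht
    rw [← Real.rpow_natCast t 2, ← Real.rpow_mul ht]
    congr 1
    push_cast
    ring
  refine ⟨_, h2.congr_of_eventuallyEq (Filter.Eventually.of_forall fun y' => ?_), ?_⟩
  · exact (e _ _ (norm_nonneg _)).symm
  · intro v
    have e2 := e ‖a - k • y‖ (p - 2) h.le
    have e3 : p / 2 - 1 = (p - 2) / 2 := by ring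
    rw [← e2, ← e3]
    simp [inner_sub_left, inner_smul_left]
    ring

/-- Outward normal derivative (Poisson kernel) formula for the Green function of the
`n`-dimensional ball `B(0,R)`, `n ≥ 3`:
`G(x,y') = (1/((2−n)c))(‖x − y'‖^{2−n} − ‖(R/‖x‖)x − (‖x‖/R)y'‖^{2−n})`
has normal derivative `(R² − ‖x‖²)/(cR‖x − y‖ⁿ)` at boundary points `‖y‖ = R`. -/
theorem green_function_ball_normal_derivative
    (n : ℕ) (hn : 3 ≤ n) (c R : ℝ) (hc : 0 < c) (hR : 0 < R)
    (x y : EuclideanSpace ℝ (Fin n))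
    (hx0 : 0 < ‖x‖) (hxR : ‖x‖ < R) (hy : ‖y‖ = R) :
    DifferentiableAt ℝ
      (fun y' : EuclideanSpace ℝ (Fin n) =>
        (1 / (((2:ℝ) - n) * c)) *
          (‖x - y'‖ ^ ((2:ℝ) - n) -
            ‖(R / ‖x‖) • x - (‖x‖ / R) • y'‖ ^ ((2:ℝ) - n))) y ∧
    fderiv ℝ
      (fun y' : EuclideanSpace ℝ (Fin n) =>
        (1 / (((2:ℝ) - n) * c)) *
          (‖x - y'‖ ^ ((2:ℝ) - n) -
            ‖(R / ‖x‖) • x - (‖x‖ / R) • y'‖ ^ ((2:ℝ) - n))) y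
        ((1 / R) • y)
      = (R ^ 2 - ‖x‖ ^ 2) / (c * R * ‖x - y‖ ^ n) := by
  have hxy : 0 < ‖x - y‖ := by
    rw [norm_pos_iff, sub_ne_zero]
    rintro rfl
    linarith
  have hyy : inner ℝ y y = R ^ 2 := by rw [real_inner_self_eq_norm_sq, hy]
  have hd : ‖(R / ‖x‖) • x - (‖x‖ / R) • y‖ = ‖x - y‖ := by
    rw [← sq_eq_sq₀ (norm_nonneg _) (norm_nonneg _), norm_sub_sq_real, norm_sub_sq_real,
      norm_smul, norm_smul, inner_smul_left, inner_smul_right, hy]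
    simp only [norm_div, abs_norm, Real.norm_eq_abs, abs_of_pos hR, conj_trivial]
    field_simp
    ring
  obtain ⟨L1, hL1, hv1⟩ := aux_norm_rpow ((2:ℝ) - n) 1 x y (by simpa using hxy)
  obtain ⟨L2, hL2, hv2⟩ := aux_norm_rpow ((2:ℝ) - n) (‖x‖ / R) ((R / ‖x‖) • x) y
    (by rw [hd]; exact hxy)
  simp only [one_smul] at hL1 hv1
  have H := (hL1.sub hL2).const_mul (1 / (((2:ℝ) - n) * c))
  refine ⟨H.differentiableAt, ?_⟩
  have hp : (2:ℝ) - n ≠ 0 := by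
    have : (3:ℝ) ≤ n := by exact_mod_cast hn
    intro h0
    linarith
  have hpow : ‖x - y‖ ^ ((2:ℝ) - n - 2) = (‖x - y‖ ^ n)⁻¹ := by
    rw [show (2:ℝ) - n - 2 = -(n:ℝ) by ring, Real.rpow_neg hxy.le, Real.rpow_natCast]
  refine (congrArg (fun L => L ((1 / R) • y)) H.fderiv).trans ?_
  simp only [smul_apply, sub_apply, hv1, hv2, hd, hpow,
    inner_smul_right, inner_sub_left, inner_smul_left, hyy, smul_eq_mul, conj_trivial]
  have := pow_pos hxy n
  field_simp
  ring
end

section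
/- Let R > 0, let y ∈ ℝ² satisfy ‖y‖ = R, and let x ∈ ℝ² with x ≠ y. Define the Poisson kernel P(x') = (R² − ‖x'‖²)/(2πR‖x' − y‖²). Then the inner product of the vector y − x with the gradient at x of the map x' ↦ P(x') equals 1/(2πR) + P(x); explicitly, ⟪y − x, ∇P(x)⟫ = 1/(2πR) + (R² − ‖x‖²)/(2πR‖x − y‖²). -/
open Real
open scoped RealInnerProductSpace

/-- Key geometric boundary identity on the disc (the case `n = 2`):
`⟪y − x, ∇P(x)⟫ = 1/(2πR) + P(x)` for the Poisson kernel
`P(x') = (R² − ‖x'‖²)/(2πR‖x' − y‖²)` with `‖y‖ = R`. -/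
theorem poisson_kernel_radial_identity
    (R : ℝ) (hR : 0 < R) (y : EuclideanSpace ℝ (Fin 2)) (hy : ‖y‖ = R)
    (x : EuclideanSpace ℝ (Fin 2)) (hxy : x ≠ y) :
    ⟪y - x,
      gradient
        (fun x' : EuclideanSpace ℝ (Fin 2) =>
          (R ^ 2 - ‖x'‖ ^ 2) / (2 * π * R * ‖x' - y‖ ^ 2)) x⟫
      = 1 / (2 * π * R) + (R ^ 2 - ‖x‖ ^ 2) / (2 * π * R * ‖x - y‖ ^ 2) := by
  have hD : 0 < ‖x - y‖ ^ 2 := by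
    have := norm_pos_iff.mpr (sub_ne_zero.mpr hxy)
    positivity
  have hpi := Real.pi_pos
  have h1 : HasFDerivAt (fun x' : EuclideanSpace ℝ (Fin 2) => R ^ 2 - ‖x'‖ ^ 2) _ x :=
    ((hasFDerivAt_id x).norm_sq).const_sub (R ^ 2)
  have h2 : HasFDerivAt (fun x' : EuclideanSpace ℝ (Fin 2) => 2 * π * R * ‖x' - y‖ ^ 2) _ x :=
    (((hasFDerivAt_id x).sub_const y).norm_sq).const_mul (2 * π * R)
  have hne : 2 * π * R * ‖x - y‖ ^ 2 ≠ 0 := by positivity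
  have h2i := (hasDerivAt_inv hne).comp_hasFDerivAt x h2
  have h3 : HasFDerivAt (fun x' : EuclideanSpace ℝ (Fin 2) =>
      (R ^ 2 - ‖x'‖ ^ 2) / (2 * π * R * ‖x' - y‖ ^ 2)) _ x := HasFDerivAt.mul h1 h2i
  have hin : ⟪x, y - x⟫ = (R ^ 2 - ‖x‖ ^ 2 - ‖x - y‖ ^ 2) / 2 := by
    have := norm_add_sq_real x (y - x)
    rw [add_sub_cancel, hy, norm_sub_rev y x] at this
    linarith
  have hin2 : ⟪x - y, y - x⟫ = - ‖x - y‖ ^ 2 := by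
    rw [← neg_sub x y, inner_neg_right, real_inner_self_eq_norm_sq]
  rw [real_inner_comm, gradient, InnerProductSpace.toDual_symm_apply, h3.fderiv]
  have hin3 : ⟪y, y - x⟫ = (R ^ 2 - ‖x‖ ^ 2 - ‖x - y‖ ^ 2) / 2 + ‖x - y‖ ^ 2 := by
    rw [inner_sub_left, hin] at hin2
    linarith
  have hn : ‖x - y‖ ≠ 0 := norm_ne_zero_iff.mpr (sub_ne_zero.mpr hxy)
  simp [hin, hin3]
  field_simp
  ring
end

section
/- Let Ω be the open unit disc in ℝ² with Lebesgue measure, let γ > 1, ρ̄ > 0, M ≥ ρ̄ and q ∈ [2,6]. Define G(ρ) = (ρ^γ − ρ ρ̄^{γ−1})/(γ−1) + (ρ̄ − ρ)·ρ̄^{γ−1} for ρ ≥ 0. Then there exists a constant C > 0, depending only on γ, ρ̄, M and q, such that for every measurable function ρ : Ω → ℝ with 0 ≤ ρ(x) ≤ M for almost every x ∈ Ω and with E := ∫_Ω G(ρ(x)) dx ≤ 1, one has (∫_Ω |ρ(x)^γ − ρ̄^γ|^q dx)^{1/q} ≤ C·E^{1/(qγ)}. -/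
open MeasureTheory

/-- Lipschitz bound for real powers with exponent at least one. -/
lemma pbd_rpow_lip (r B u v : ℝ) (hr : 1 ≤ r) (hu : u ∈ Set.Icc (0:ℝ) B)
    (hv : v ∈ Set.Icc (0:ℝ) B) : |u ^ r - v ^ r| ≤ r * B ^ (r - 1) * |u - v| := by
  have h := Convex.norm_image_sub_le_of_norm_hasDerivWithin_le (f := fun x : ℝ => x ^ r)
    (f' := fun x : ℝ => r * x ^ (r - 1)) (s := Set.Icc (0:ℝ) B) (C := r * B ^ (r - 1))
    (x := v) (y := u)
    (fun x _ => (Real.hasDerivAt_rpow_const (Or.inr hr)).hasDerivWithinAt)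
    (fun x hx => by
      have h0 : 0 ≤ x ^ (r - 1) := Real.rpow_nonneg hx.1 _
      rw [Real.norm_eq_abs, abs_of_nonneg (by positivity)]
      have := Real.rpow_le_rpow hx.1 hx.2 (by linarith : 0 ≤ r - 1)
      gcongr)
    (convex_Icc _ _) hv hu
  simpa [Real.norm_eq_abs] using h

/-- Pointwise comparison of the squared pressure deviation with the potential energy. -/
lemma pbd_pointwise (γ b M : ℝ) (hγ : 1 < γ) (hb : 0 < b) (hM : b ≤ M) :
    ∃ K : ℝ, 0 < K ∧ ∀ a ∈ Set.Icc (0:ℝ) M,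
      (a ^ γ - b ^ γ) ^ 2 ≤
        K * ((a ^ γ - a * b ^ (γ - 1)) / (γ - 1) + (b - a) * b ^ (γ - 1)) := by
  have hM0 : 0 < M := lt_of_lt_of_le hb hM
  have hs : 0 < γ - 1 := by linarith
  set r : ℝ := γ / (γ - 1) with hr
  have hr1 : 1 ≤ r := by rw [hr, le_div_iff₀ hs]; linarith
  set B : ℝ := M ^ (γ - 1) with hB
  have hB0 : 0 < B := Real.rpow_pos_of_pos hM0 _
  set L : ℝ := r * B ^ (r - 1) with hL
  have hL0 : 0 < L := by have := Real.rpow_pos_of_pos hB0 (r - 1); positivity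
  have hlip : ∀ a ∈ Set.Icc (0:ℝ) M, |a ^ γ - b ^ γ| ≤ L * |a ^ (γ - 1) - b ^ (γ - 1)| := by
    intro a ha
    have hpow : ∀ x : ℝ, 0 ≤ x → (x ^ (γ - 1)) ^ r = x ^ γ := by
      intro x hx
      rw [← Real.rpow_mul hx, hr, mul_div_cancel₀ _ hs.ne']
    have h := pbd_rpow_lip r B (a ^ (γ - 1)) (b ^ (γ - 1)) hr1
      ⟨Real.rpow_nonneg ha.1 _, Real.rpow_le_rpow ha.1 ha.2 hs.le⟩
      ⟨Real.rpow_nonneg hb.le _, Real.rpow_le_rpow hb.le hM hs.le⟩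
    rwa [hpow a ha.1, hpow b hb.le] at h
  set K : ℝ := 2 * (γ - 1) * B * L with hK
  refine ⟨K, by positivity, ?_⟩
  set F : ℝ → ℝ := fun a => K * ((a ^ γ - a * b ^ (γ - 1)) / (γ - 1) + (b - a) * b ^ (γ - 1))
    - (a ^ γ - b ^ γ) ^ 2 with hF
  set F' : ℝ → ℝ := fun a => 2 * γ * (B * L * (a ^ (γ - 1) - b ^ (γ - 1))
    - a ^ (γ - 1) * (a ^ γ - b ^ γ)) with hF'
  have hder : ∀ a : ℝ, HasDerivAt F (F' a) a := by
    intro a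
    have h1 : HasDerivAt (fun x : ℝ => x ^ γ) (γ * a ^ (γ - 1)) a :=
      Real.hasDerivAt_rpow_const (Or.inr hγ.le)
    have h2 := (((((h1.sub ((hasDerivAt_id a).mul_const (b ^ (γ - 1)))).div_const (γ - 1)).add
      (((hasDerivAt_id a).const_sub b).mul_const (b ^ (γ - 1)))).const_mul K).sub
      ((h1.sub_const (b ^ γ)).pow 2))
    refine h2.congr_deriv ?_
    simp only [hF', hK]
    field_simp
    push_cast
    ring
  have hFb : F b = 0 := by
    simp only [hF]
    have : b ^ γ = b * b ^ (γ - 1) := by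
      rw [← Real.rpow_one_add' hb.le (by linarith)]; congr 1; ring
    rw [this]; ring
  have hcont : Continuous F := continuous_iff_continuousAt.2 fun a => (hder a).continuousAt
  have key : ∀ a ∈ Set.Icc (0:ℝ) M,
      a ^ (γ - 1) * |a ^ γ - b ^ γ| ≤ B * L * |a ^ (γ - 1) - b ^ (γ - 1)| := by
    intro a ha
    rw [mul_assoc]
    exact mul_le_mul (Real.rpow_le_rpow ha.1 ha.2 hs.le) (hlip a ha) (abs_nonneg _) hB0.le
  intro a ha
  suffices h : 0 ≤ F a by simp only [hF] at h; linarith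
  rcases le_total b a with hab | hab
  · have hmono : MonotoneOn F (Set.Icc b M) := by
      refine monotoneOn_of_deriv_nonneg (convex_Icc _ _) hcont.continuousOn
        (fun x _ => (hder x).differentiableAt.differentiableWithinAt) ?_
      intro x hx
      rw [interior_Icc] at hx
      rw [(hder x).deriv]
      have k := key x ⟨hb.le.trans hx.1.le, hx.2.le⟩
      rw [abs_of_nonneg (sub_nonneg.2 (Real.rpow_le_rpow hb.le hx.1.le (by linarith))),
        abs_of_nonneg (sub_nonneg.2 (Real.rpow_le_rpow hb.le hx.1.le hs.le))] at k
      exact mul_nonneg (by linarith) (by linarith)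
    have := hmono ⟨le_rfl, hM⟩ ⟨hab, ha.2⟩ hab
    linarith
  · have hanti : AntitoneOn F (Set.Icc 0 b) := by
      refine antitoneOn_of_deriv_nonpos (convex_Icc _ _) hcont.continuousOn
        (fun x _ => (hder x).differentiableAt.differentiableWithinAt) ?_
      intro x hx
      rw [interior_Icc] at hx
      rw [(hder x).deriv]
      have k := key x ⟨hx.1.le, hx.2.le.trans hM⟩
      rw [abs_of_nonpos (sub_nonpos.2 (Real.rpow_le_rpow hx.1.le hx.2.le (by linarith))),
        abs_of_nonpos (sub_nonpos.2 (Real.rpow_le_rpow hx.1.le hx.2.le hs.le))] at k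
      exact mul_nonpos_of_nonneg_of_nonpos (by linarith) (by linarith)
    have := hanti ⟨ha.1, hab⟩ ⟨hb.le, le_rfl⟩ hab
    linarith



/-- Lemma 3.1 (bounded-density version): on the unit disc `Ω ⊂ ℝ²`, for densities
`0 ≤ ρ ≤ M` a.e. with potential energy `E = ∫_Ω G(ρ) ≤ 1`, the pressure deviation
satisfies `‖ρ^γ − ρ̄^γ‖_{L^q(Ω)} ≤ C E^{1/(qγ)}` for `q ∈ [2,6]`. -/
theorem pressure_Lq_bound
    (γ ρbar M q : ℝ) (hγ : 1 < γ) (hρbar : 0 < ρbar) (hM : ρbar ≤ M)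
    (hq : q ∈ Set.Icc (2:ℝ) 6) :
    ∃ C : ℝ, 0 < C ∧
      ∀ ρ : EuclideanSpace ℝ (Fin 2) → ℝ, Measurable ρ →
        (∀ᵐ x ∂(volume.restrict (Metric.ball (0 : EuclideanSpace ℝ (Fin 2)) 1)),
          ρ x ∈ Set.Icc (0:ℝ) M) →
        (∫ x in Metric.ball (0 : EuclideanSpace ℝ (Fin 2)) 1,
            ((ρ x ^ γ - ρ x * ρbar ^ (γ - 1)) / (γ - 1) +
              (ρbar - ρ x) * ρbar ^ (γ - 1))) ≤ 1 →
        (∫ x in Metric.ball (0 : EuclideanSpace ℝ (Fin 2)) 1,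
            |ρ x ^ γ - ρbar ^ γ| ^ q) ^ (1 / q) ≤
          C * (∫ x in Metric.ball (0 : EuclideanSpace ℝ (Fin 2)) 1,
            ((ρ x ^ γ - ρ x * ρbar ^ (γ - 1)) / (γ - 1) +
              (ρbar - ρ x) * ρbar ^ (γ - 1))) ^ (1 / (q * γ)) := by

  obtain ⟨K, hK, hpt⟩ := pbd_pointwise γ ρbar M hγ hρbar hM
  have hM0 : 0 < M := lt_of_lt_of_le hρbar hM
  have hq0 : 0 < q := by linarith [hq.1]
  have hMg : 0 < M ^ γ := Real.rpow_pos_of_pos hM0 _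
  set K2 : ℝ := (M ^ γ) ^ (q - 2) * K with hK2
  have hK20 : 0 < K2 := mul_pos (Real.rpow_pos_of_pos hMg _) hK
  refine ⟨K2 ^ (1 / q), Real.rpow_pos_of_pos hK20 _, ?_⟩
  intro ρ hρ hae hE
  set G : ℝ → ℝ := fun a => (a ^ γ - a * ρbar ^ (γ - 1)) / (γ - 1) +
    (ρbar - a) * ρbar ^ (γ - 1) with hG
  set μ := volume.restrict (Metric.ball (0 : EuclideanSpace ℝ (Fin 2)) 1) with hμ
  change (∫ x, G (ρ x) ∂μ) ≤ 1 at hE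
  change (∫ x, |ρ x ^ γ - ρbar ^ γ| ^ q ∂μ) ^ (1 / q) ≤
    K2 ^ (1 / q) * (∫ x, G (ρ x) ∂μ) ^ (1 / (q * γ))
  have hGnn : ∀ a ∈ Set.Icc (0:ℝ) M, 0 ≤ G a := by
    intro a ha
    have := (sq_nonneg _).trans (hpt a ha)
    exact nonneg_of_mul_nonneg_right this hK
  have hptq : ∀ a ∈ Set.Icc (0:ℝ) M, |a ^ γ - ρbar ^ γ| ^ q ≤ K2 * G a := by
    intro a ha
    have h1 : |a ^ γ - ρbar ^ γ| ≤ M ^ γ := by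
      have e1 := Real.rpow_le_rpow ha.1 ha.2 (by linarith : 0 ≤ γ)
      have e2 := Real.rpow_le_rpow hρbar.le hM (by linarith : 0 ≤ γ)
      have e3 := Real.rpow_nonneg ha.1 γ
      have e4 := Real.rpow_nonneg hρbar.le γ
      rw [abs_le]; constructor <;> linarith
    have h2 : |a ^ γ - ρbar ^ γ| ^ q
        = |a ^ γ - ρbar ^ γ| ^ (q - 2) * (a ^ γ - ρbar ^ γ) ^ 2 := by
      rw [← sq_abs (a ^ γ - ρbar ^ γ), ← Real.rpow_two,
        ← Real.rpow_add_of_nonneg (abs_nonneg _) (by linarith [hq.1]) (by norm_num)]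
      congr 1; ring
    rw [h2, hK2, mul_assoc]
    exact mul_le_mul (Real.rpow_le_rpow (abs_nonneg _) h1 (by linarith [hq.1])) (hpt a ha)
      (sq_nonneg _) (Real.rpow_nonneg hMg.le _)
  haveI : IsFiniteMeasure μ := ⟨by
    rw [hμ, Measure.restrict_apply_univ]; exact measure_ball_lt_top⟩
  have hGc : Continuous G := by
    have : Continuous fun a : ℝ => a ^ γ :=
      Real.continuous_rpow_const (by linarith)
    simp only [hG]; fun_prop
  obtain ⟨D, hD⟩ := (isCompact_Icc (a := (0:ℝ)) (b := M)).exists_bound_of_continuousOn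
    hGc.continuousOn
  have hint : Integrable (fun x => G (ρ x)) μ :=
    Integrable.of_bound (hGc.measurable.comp hρ).aestronglyMeasurable D
      (hae.mono fun x hx => hD _ hx)
  have hE0 : 0 ≤ ∫ x, G (ρ x) ∂μ := integral_nonneg_of_ae (hae.mono fun x hx => hGnn _ hx)
  have hle : ∫ x, |ρ x ^ γ - ρbar ^ γ| ^ q ∂μ ≤ K2 * ∫ x, G (ρ x) ∂μ := by
    rw [← integral_const_mul]
    exact integral_mono_of_nonneg
      (Filter.Eventually.of_forall fun x => Real.rpow_nonneg (abs_nonneg _) _)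
      (hint.const_mul _) (hae.mono fun x hx => hptq _ hx)
  have hnn : 0 ≤ ∫ x, |ρ x ^ γ - ρbar ^ γ| ^ q ∂μ :=
    integral_nonneg fun x => Real.rpow_nonneg (abs_nonneg _) _
  calc (∫ x, |ρ x ^ γ - ρbar ^ γ| ^ q ∂μ) ^ (1 / q)
      ≤ (K2 * ∫ x, G (ρ x) ∂μ) ^ (1 / q) := Real.rpow_le_rpow hnn hle (by positivity)
    _ = K2 ^ (1 / q) * (∫ x, G (ρ x) ∂μ) ^ (1 / q) := Real.mul_rpow hK20.le hE0
    _ ≤ K2 ^ (1 / q) * (∫ x, G (ρ x) ∂μ) ^ (1 / (q * γ)) := by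
      have hexp : 1 / (q * γ) ≤ 1 / q :=
        one_div_le_one_div_of_le hq0 (by nlinarith)
      have hpos : 0 < 1 / (q * γ) := by positivity
      exact mul_le_mul_of_nonneg_left
        (Real.rpow_le_rpow_of_exponent_ge' hE0 hE hpos.le hexp) (Real.rpow_nonneg hK20.le _)
end

section
/- Let Ω be the open unit disc in ℝ² with Lebesgue measure, let γ > 1, ρ̄ > 0 and M ≥ ρ̄. Define G(ρ) = (ρ^γ − ρ ρ̄^{γ−1})/(γ−1) + (ρ̄ − ρ)·ρ̄^{γ−1} for ρ ≥ 0. Then there exists a constant C > 0, depending only on γ, ρ̄ and M, such that for every measurable function ρ : Ω → ℝ with 0 ≤ ρ(x) ≤ M for almost every x ∈ Ω, one has ∫_Ω |ρ(x)^γ − ρ̄^γ| dx ≤ C·(∫_Ω G(ρ(x)) dx)^{1/2}; in particular the average pressure satisfies |⨍_Ω ρ(x)^γ dx − ρ̄^γ| ≤ C·(∫_Ω G(ρ(x)) dx)^{1/2}. -/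
open MeasureTheory

lemma apb_lip (r T s c : ℝ) (hr : 1 < r) (hs : s ∈ Set.Icc 0 T) (hc : c ∈ Set.Icc 0 T) :
    |s ^ r - c ^ r| ≤ (r * T ^ (r - 1)) * |s - c| := by
  have h := Convex.norm_image_sub_le_of_norm_hasDerivWithin_le (f := fun x : ℝ => x ^ r)
    (f' := fun x : ℝ => r * x ^ (r - 1)) (s := Set.Icc 0 T) (C := r * T ^ (r - 1))
    (fun x _ => (Real.hasDerivAt_rpow_const (Or.inr hr.le)).hasDerivWithinAt)
    (fun x hx => by
      rw [Real.norm_eq_abs, abs_of_nonneg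
        (mul_nonneg (by linarith) (Real.rpow_nonneg hx.1 _))]
      exact mul_le_mul_of_nonneg_left
        (Real.rpow_le_rpow hx.1 hx.2 (by linarith)) (by linarith))
    (convex_Icc 0 T) hc hs
  simpa [Real.norm_eq_abs] using h

lemma apb_lip2 (γ b M : ℝ) (hγ : 1 < γ) (hb : 0 < b) (hM : b ≤ M) :
    ∃ L : ℝ, 0 < L ∧ ∀ s ∈ Set.Icc 0 M,
      |s ^ γ - b ^ γ| ≤ L * |s ^ (γ - 1) - b ^ (γ - 1)| := by
  have hM0 : 0 < M := hb.trans_le hM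
  have hα : 0 < γ - 1 := by linarith
  have hr : 1 < γ / (γ - 1) := by rw [lt_div_iff₀ hα]; linarith
  refine ⟨(γ / (γ - 1)) * (M ^ (γ - 1)) ^ (γ / (γ - 1) - 1), by positivity, fun s hs => ?_⟩
  have key : ∀ x : ℝ, 0 ≤ x → x ^ γ = (x ^ (γ - 1)) ^ (γ / (γ - 1)) := fun x hx => by
    rw [← Real.rpow_mul hx]; congr 1; field_simp
  rw [key s hs.1, key b hb.le]
  exact apb_lip _ _ _ _ hr
    ⟨Real.rpow_nonneg hs.1 _, Real.rpow_le_rpow hs.1 hs.2 hα.le⟩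
    ⟨Real.rpow_nonneg hb.le _, Real.rpow_le_rpow hb.le hM hα.le⟩

lemma apb_pt (γ b M : ℝ) (hγ : 1 < γ) (hb : 0 < b) (hM : b ≤ M) :
    ∃ K : ℝ, 0 < K ∧ ∀ s ∈ Set.Icc 0 M,
      (s ^ γ - b ^ γ) ^ 2 ≤ K * ((s ^ γ - s * b ^ (γ - 1)) / (γ - 1) +
              (b - s) * b ^ (γ - 1)) := by
  obtain ⟨L, hL, hlip⟩ := apb_lip2 γ b M hγ hb hM
  have hM0 : 0 < M := hb.trans_le hM
  have hα : 0 < γ - 1 := by linarith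
  set K := 2 * M ^ (γ - 1) * L with hK
  have hK0 : 0 < K := by positivity
  let F : ℝ → ℝ := fun s => K * (s ^ γ - γ * b ^ (γ - 1) * s + (γ - 1) * b ^ γ) - (s ^ γ - b ^ γ) ^ 2
  let F' : ℝ → ℝ := fun s =>
    γ * (K * (s ^ (γ - 1) - b ^ (γ - 1)) - 2 * s ^ (γ - 1) * (s ^ γ - b ^ γ))
  have hF : ∀ s, HasDerivAt F (F' s) s := fun s => by
    have h1 : HasDerivAt (fun x : ℝ => x ^ γ) (γ * s ^ (γ - 1)) s :=
      Real.hasDerivAt_rpow_const (Or.inr hγ.le)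
    have h2 := (((h1.sub ((hasDerivAt_id s).const_mul (γ * b ^ (γ - 1)))).add_const
      ((γ - 1) * b ^ γ)).const_mul K).sub ((h1.sub_const (b ^ γ)).pow 2)
    refine HasDerivAt.congr_deriv (f := F) h2 ?_
    simp only [F', Nat.cast_ofNat, mul_one, Nat.add_one_sub_one, pow_one]
    ring
  have hcont : Continuous F := continuous_iff_continuousAt.2 fun s => (hF s).continuousAt
  have hbb : b ^ γ = b * b ^ (γ - 1) := by
    rw [Real.rpow_sub_one hb.ne']; field_simp
  have hFb : F b = 0 := by simp only [F]; rw [hbb]; ring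
  have hup : ∀ s, b ≤ s → s ≤ M → 0 ≤ F' s := fun s h1 h2 => by
    have h0 : 0 ≤ s := hb.le.trans h1
    have h3 := hlip s ⟨h0, h2⟩
    rw [abs_of_nonneg (sub_nonneg.2 (Real.rpow_le_rpow hb.le h1 (by linarith))),
      abs_of_nonneg (sub_nonneg.2 (Real.rpow_le_rpow hb.le h1 hα.le))] at h3
    have h4 : s ^ (γ - 1) ≤ M ^ (γ - 1) := Real.rpow_le_rpow h0 h2 hα.le
    have h5 : 0 ≤ s ^ γ - b ^ γ := sub_nonneg.2 (Real.rpow_le_rpow hb.le h1 (by linarith))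
    have h6 := mul_le_mul h4 h3 h5 (Real.rpow_nonneg hM0.le _)
    refine mul_nonneg (by linarith) ?_
    rw [hK]; linarith
  have hdn : ∀ s, 0 ≤ s → s ≤ b → F' s ≤ 0 := fun s h0 h1 => by
    have h2 := h1.trans hM
    have h3 := hlip s ⟨h0, h2⟩
    rw [abs_sub_comm, abs_sub_comm (s ^ (γ - 1)), abs_of_nonneg (sub_nonneg.2 (Real.rpow_le_rpow h0 h1 (by linarith))),
      abs_of_nonneg (sub_nonneg.2 (Real.rpow_le_rpow h0 h1 hα.le))] at h3
    have h4 : s ^ (γ - 1) ≤ M ^ (γ - 1) := Real.rpow_le_rpow h0 h2 hα.le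
    have h5 : 0 ≤ b ^ γ - s ^ γ := sub_nonneg.2 (Real.rpow_le_rpow h0 h1 (by linarith))
    have h6 := mul_le_mul h4 h3 h5 (Real.rpow_nonneg hM0.le _)
    refine mul_nonpos_of_nonneg_of_nonpos (by linarith) ?_
    rw [hK]; linarith
  have hFnn : ∀ s ∈ Set.Icc 0 M, 0 ≤ F s := fun s hs => by
    rcases le_total b s with h | h
    · have hm : MonotoneOn F (Set.Icc b M) := by
        refine monotoneOn_of_deriv_nonneg (convex_Icc b M) hcont.continuousOn
          (fun x _ => (hF x).differentiableAt.differentiableWithinAt) fun x hx => ?_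
        rw [(hF x).deriv]
        have := interior_subset hx
        exact hup x this.1 this.2
      have := hm ⟨le_rfl, hM⟩ ⟨h, hs.2⟩ h
      linarith
    · have hm : AntitoneOn F (Set.Icc 0 b) := by
        refine antitoneOn_of_deriv_nonpos (convex_Icc 0 b) hcont.continuousOn
          (fun x _ => (hF x).differentiableAt.differentiableWithinAt) fun x hx => ?_
        rw [(hF x).deriv]
        have := interior_subset hx
        exact hdn x this.1 this.2
      have := hm ⟨hs.1, h⟩ ⟨hb.le, le_rfl⟩ h
      linarith
  refine ⟨K * (γ - 1), by positivity, fun s hs => ?_⟩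
  have h := hFnn s hs
  have e : K * (γ - 1) * ((s ^ γ - s * b ^ (γ - 1)) / (γ - 1) + (b - s) * b ^ (γ - 1))
      = K * (s ^ γ - γ * b ^ (γ - 1) * s + (γ - 1) * b ^ γ) := by
    rw [hbb]; field_simp; ring
  rw [e]
  simp only [F] at h
  linarith

lemma apb_cs {X : Type*} [MeasurableSpace X] (μ : Measure X) [IsFiniteMeasure μ] (hV : 0 < μ.real Set.univ)
    (f : X → ℝ) (hf : Integrable f μ) (hf2 : Integrable (fun x => f x ^ 2) μ) :
    (∫ x, f x ∂μ) ^ 2 ≤ μ.real Set.univ * ∫ x, f x ^ 2 ∂μ := by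
  set V := μ.real Set.univ
  set I := ∫ x, f x ∂μ
  have h0 : 0 ≤ ∫ x, (f x ^ 2 - (2 * (I / V)) * f x + (I / V) ^ 2) ∂μ :=
    integral_nonneg fun x => by
      have := sq_nonneg (f x - I / V)
      simp only [Pi.zero_apply]; linarith
  have hsub : Integrable (fun x => f x ^ 2 - (2 * (I / V)) * f x) μ := hf2.sub (hf.const_mul _)
  rw [integral_add hsub (integrable_const _),
    integral_sub hf2 (hf.const_mul _), integral_const_mul, integral_const, smul_eq_mul] at h0
  change 0 ≤ _ - 2 * (I / V) * I + V * _ at h0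
  have h1 := mul_nonneg hV.le h0
  have e : V * ((∫ x, f x ^ 2 ∂μ) - 2 * (I / V) * I + V * (I / V) ^ 2)
    = V * (∫ x, f x ^ 2 ∂μ) - I ^ 2 := by field_simp; ring
  linarith



/-- Average-pressure deviation bound on the unit disc `Ω ⊂ ℝ²`: for densities
`0 ≤ ρ ≤ M` a.e., `∫_Ω |ρ^γ − ρ̄^γ| ≤ C (∫_Ω G(ρ))^{1/2}` and in particular
`|⨍_Ω ρ^γ − ρ̄^γ| ≤ C (∫_Ω G(ρ))^{1/2}`. -/
theorem average_pressure_bound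
    (γ ρbar M : ℝ) (hγ : 1 < γ) (hρbar : 0 < ρbar) (hM : ρbar ≤ M) :
    ∃ C : ℝ, 0 < C ∧
      ∀ ρ : EuclideanSpace ℝ (Fin 2) → ℝ, Measurable ρ →
        (∀ᵐ x ∂(volume.restrict (Metric.ball (0 : EuclideanSpace ℝ (Fin 2)) 1)),
          ρ x ∈ Set.Icc (0:ℝ) M) →
        (∫ x in Metric.ball (0 : EuclideanSpace ℝ (Fin 2)) 1,
            |ρ x ^ γ - ρbar ^ γ|) ≤
          C * (∫ x in Metric.ball (0 : EuclideanSpace ℝ (Fin 2)) 1,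
            ((ρ x ^ γ - ρ x * ρbar ^ (γ - 1)) / (γ - 1) +
              (ρbar - ρ x) * ρbar ^ (γ - 1))) ^ ((1:ℝ) / 2) ∧
        |(⨍ x in Metric.ball (0 : EuclideanSpace ℝ (Fin 2)) 1, ρ x ^ γ) - ρbar ^ γ| ≤
          C * (∫ x in Metric.ball (0 : EuclideanSpace ℝ (Fin 2)) 1,
            ((ρ x ^ γ - ρ x * ρbar ^ (γ - 1)) / (γ - 1) +
              (ρbar - ρ x) * ρbar ^ (γ - 1))) ^ ((1:ℝ) / 2) := by
  obtain ⟨K, hK, hpt⟩ := apb_pt γ ρbar M hγ hρbar hM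
  set μ := (volume : Measure (EuclideanSpace ℝ (Fin 2))).restrict (Metric.ball 0 1) with hμ
  have hfin : IsFiniteMeasure μ := ⟨by
    rw [hμ, Measure.restrict_apply_univ]; exact measure_ball_lt_top⟩
  have hV : 0 < μ.real Set.univ := by
    rw [measureReal_def, hμ, Measure.restrict_apply_univ]
    exact ENNReal.toReal_pos (Metric.measure_ball_pos _ _ one_pos).ne' measure_ball_lt_top.ne
  set V := μ.real Set.univ with hVdef
  refine ⟨(1 + 1 / V) * Real.sqrt (V * K), by positivity, fun ρ hρ hae => ?_⟩
  have hM0 : 0 < M := hρbar.trans_le hM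
  have iρ : Integrable ρ μ := by
    refine Integrable.of_bound hρ.aestronglyMeasurable M ?_
    filter_upwards [hae] with x hx
    rw [Real.norm_eq_abs, abs_of_nonneg hx.1]; exact hx.2
  have iρg : Integrable (fun x => ρ x ^ γ) μ := by
    refine Integrable.of_bound (hρ.pow_const γ).aestronglyMeasurable (M ^ γ) ?_
    filter_upwards [hae] with x hx
    rw [Real.norm_eq_abs, abs_of_nonneg (Real.rpow_nonneg hx.1 _)]
    exact Real.rpow_le_rpow hx.1 hx.2 (by linarith)
  have id : Integrable (fun x => ρ x ^ γ - ρbar ^ γ) μ := iρg.sub (integrable_const _)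
  have iG : Integrable (fun x => (ρ x ^ γ - ρ x * ρbar ^ (γ - 1)) / (γ - 1) +
              (ρbar - ρ x) * ρbar ^ (γ - 1)) μ :=
    ((iρg.sub (iρ.mul_const _)).div_const _).add (((integrable_const _).sub iρ).mul_const _)
  have i2 : Integrable (fun x => |ρ x ^ γ - ρbar ^ γ| ^ 2) μ := by
    refine (iG.const_mul K).mono' (id.abs.aestronglyMeasurable.pow 2) ?_
    filter_upwards [hae] with x hx
    rw [Real.norm_eq_abs, abs_of_nonneg (sq_nonneg _), sq_abs]
    exact hpt _ hx
  have hcs := apb_cs μ hV _ id.abs i2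
  have hle : ∫ x, |ρ x ^ γ - ρbar ^ γ| ^ 2 ∂μ ≤ ∫ x, K * ((ρ x ^ γ - ρ x * ρbar ^ (γ - 1)) / (γ - 1) +
              (ρbar - ρ x) * ρbar ^ (γ - 1)) ∂μ := by
    refine integral_mono_ae i2 (iG.const_mul K) ?_
    filter_upwards [hae] with x hx
    rw [sq_abs]
    exact hpt _ hx
  rw [integral_const_mul] at hle
  rw [← Real.sqrt_eq_rpow]
  set J := ∫ x, ((ρ x ^ γ - ρ x * ρbar ^ (γ - 1)) / (γ - 1) +
              (ρbar - ρ x) * ρbar ^ (γ - 1)) ∂μ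
  set I := ∫ x, |ρ x ^ γ - ρbar ^ γ| ∂μ with hI
  have hI1 : I ≤ Real.sqrt (V * K) * Real.sqrt J := by
    rw [← Real.sqrt_mul (by positivity)]
    apply Real.le_sqrt_of_sq_le
    calc I ^ 2 ≤ V * _ := hcs
      _ ≤ V * (K * J) := mul_le_mul_of_nonneg_left hle hV.le
      _ = V * K * J := by ring
  have hV1 : 0 < 1 / V := by positivity
  have hS : 0 ≤ Real.sqrt (V * K) * Real.sqrt J := by positivity
  constructor
  · rw [mul_assoc]; nlinarith [mul_nonneg hV1.le hS]
  · have hav : (⨍ x, ρ x ^ γ ∂μ) - ρbar ^ γ = (1 / V) * ∫ x, (ρ x ^ γ - ρbar ^ γ) ∂μ := by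
      rw [average_eq, integral_sub iρg (integrable_const _), integral_const, smul_eq_mul, smul_eq_mul,
        ← hVdef]
      field_simp
    rw [hav, abs_mul, abs_of_pos hV1, mul_assoc]
    have := mul_le_mul_of_nonneg_left ((abs_integral_le_integral_abs).trans hI1) hV1.le
    linarith
end
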